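/- arXiv:2302.13657 — 2 statements merged into one kernel-verified Lean document; each statement's English description precedes it below -/
import Mathlib

section
/- Let S be a σ-symbol, t_Q an S-term, and t a subterm of t_Q. Let h : T(t) → D(t_Q) be a homomorphism. If t is a V-term, then h(r_t)_t = true; if t is an R-term for a σ-symbol R, then &_t(h^R(r_t)) = true, where h^R denotes the coordinatewise action of h on R-tuples. -/
/-!
A homomorphism from a tree into `B` is built up from the leaves, one edge of `B` at a time. Hence a
property of pairs `(t, b)`, with `t` a V-term and `b` an element of `B`, that holds at `vertex` and
is propagated by `pr_i(edge_R(-))` along the edges of `B` holds at `(t, h(r_t))` for every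
homomorphism `h : T(t) → B`. For the property `b_t = true`, the condition at `vertex` is the
constraint on the domain of the dual, and the propagation along edges is condition (D1).
-/

/-- A relational signature: a type of relation symbols, each with a positive arity. -/
structure Signature : Type 1 where
  symb : Type
  ar : symb → ℕ
  ar_pos : ∀ R, 0 < ar R

/-- A relational structure over the signature `σ`. -/
structure Struct (σ : Signature) : Type 1 where
  dom : Type
  rel : ∀ R : σ.symb, Set (Fin (σ.ar R) → dom)

variable {σ τ υ : Signature}

/-- `f` is a homomorphism of `σ`-structures from `A` to `B`. -/
def IsHom (A B : Struct σ) (f : A.dom → B.dom) : Prop :=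
  ∀ R : σ.symb, ∀ x ∈ A.rel R, (fun i => f (x i)) ∈ B.rel R

/-- `A → B`: there exists a homomorphism from `A` to `B`. -/
def HomEx (A B : Struct σ) : Prop := ∃ f, IsHom A B f

/-- Terms over `σ` whose denotation is a tree rooted in a vertex: `vertex` is a V-term, and
`pr R i ts` denotes the V-term `pr_i(edge_R(ts))`.  (An R-term `edge_R(t_1, …, t_k)` is
represented by the symbol `R` together with the tuple `ts` of V-terms.) -/
inductive VTerm (σ : Signature) : Type
  | vertex : VTerm σ
  | pr (R : σ.symb) (i : Fin (σ.ar R)) (ts : Fin (σ.ar R) → VTerm σ) : VTerm σ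

/-- The domain of the tree denoted by a V-term. -/
def VTerm.domType : VTerm σ → Type
  | .vertex => PUnit
  | .pr R _ ts => (i : Fin (σ.ar R)) × (ts i).domType

/-- The root of the tree denoted by a V-term. -/
def VTerm.root : (t : VTerm σ) → t.domType
  | .vertex => PUnit.unit
  | .pr _ i ts => ⟨i, (ts i).root⟩

/-- The domain of the tree denoted by the R-term `edge_R(ts)`: the disjoint union of the
domains of the subtrees. -/
def edgeDom (R : σ.symb) (ts : Fin (σ.ar R) → VTerm σ) : Type :=
  (i : Fin (σ.ar R)) × (ts i).domType

/-- The root edge of the tree denoted by the R-term `edge_R(ts)`. -/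
def edgeRoot (R : σ.symb) (ts : Fin (σ.ar R) → VTerm σ) : Fin (σ.ar R) → edgeDom R ts :=
  fun i => ⟨i, (ts i).root⟩

/-- The relations of the tree denoted by a V-term: the relations of the disjoint subtrees,
together with the root edge. -/
def VTerm.rel : (t : VTerm σ) → ∀ S : σ.symb, Set (Fin (σ.ar S) → t.domType)
  | .vertex, _ => ∅
  | .pr R _ ts, S =>
      {x | ∃ i : Fin (σ.ar R), ∃ y ∈ (ts i).rel S, x = fun j => ⟨i, y j⟩} ∪
      {x | ∃ h : R = S, x = fun j => edgeRoot R ts (Fin.cast (congrArg σ.ar h.symm) j)}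

/-- The tree `T(t)` denoted by a V-term `t`. -/
def VTerm.tree (t : VTerm σ) : Struct σ := ⟨t.domType, t.rel⟩

/-- The tree `T(t)` denoted by the R-term `t = edge_R(ts)`. -/
def ETerm.tree (R : σ.symb) (ts : Fin (σ.ar R) → VTerm σ) : Struct σ where
  dom := edgeDom R ts
  rel S :=
    {x | ∃ i : Fin (σ.ar R), ∃ y ∈ (ts i).rel S, x = fun j => ⟨i, y j⟩} ∪
    {x | ∃ h : R = S, x = fun j => edgeRoot R ts (Fin.cast (congrArg σ.ar h.symm) j)}

/-- The V-subterms of a V-term. -/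
def VTerm.vsub : VTerm σ → Set (VTerm σ)
  | .vertex => {.vertex}
  | .pr R i ts => insert (.pr R i ts) (⋃ j, (ts j).vsub)

/-- The S-subterms of a V-term, for each `σ`-symbol `S` (an S-term `edge_S(us)` being
represented by the tuple `us`). -/
def VTerm.esub : VTerm σ → ∀ S : σ.symb, Set (Fin (σ.ar S) → VTerm σ)
  | .vertex, _ => ∅
  | .pr R _ ts, S =>
      {us | ∃ h : R = S, us = fun j => ts (Fin.cast (congrArg σ.ar h.symm) j)} ∪
      {us | ∃ j, us ∈ (ts j).esub S}

/-- A term is either a V-term or an R-term `edge_R(ts)` for some symbol `R`. -/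
def Term (σ : Signature) : Type := VTerm σ ⊕ (Σ S : σ.symb, Fin (σ.ar S) → VTerm σ)

/-- The tree denoted by a term. -/
def Term.tree : Term σ → Struct σ
  | .inl t => t.tree
  | .inr ⟨S, ts⟩ => ETerm.tree S ts

/-- The V-subterms of a term. -/
def Term.vsub : Term σ → Set (VTerm σ)
  | .inl t => t.vsub
  | .inr ⟨_, ts⟩ => ⋃ j, (ts j).vsub

/-- The S-subterms of a term. -/
def Term.esub : Term σ → ∀ S : σ.symb, Set (Fin (σ.ar S) → VTerm σ)
  | .inl t => t.esub
  | .inr ⟨R, ts⟩ => fun S =>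
      {us | ∃ h : R = S, us = fun j => ts (Fin.cast (congrArg σ.ar h.symm) j)} ∪
      {us | ∃ j, us ∈ (ts j).esub S}

/-- Tuples of booleans indexed by the V-terms in `TV` whose entry at `vertex` is `true`. -/
def BDom (TV : Set (VTerm σ)) : Type :=
  {v : {t : VTerm σ // t ∈ TV} → Bool // ∀ h : VTerm.vertex ∈ TV, v ⟨.vertex, h⟩ = true}

open Classical in
/-- The entry of `v` at the V-term `t` (by convention `false` if `t ∉ TV`). -/
noncomputable def bext (TV : Set (VTerm σ)) (v : BDom TV) (t : VTerm σ) : Bool :=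
  if h : t ∈ TV then v.1 ⟨t, h⟩ else false

/-- `&ₜ(vs) = (vs 1)_{us 1} ∧ ⋯ ∧ (vs k)_{us k}` for the R-term `t = edge_R(us)`. -/
def andT (TV : Set (VTerm σ)) {R : σ.symb} (us : Fin (σ.ar R) → VTerm σ)
    (vs : Fin (σ.ar R) → BDom TV) : Prop :=
  ∀ j, bext TV (vs j) (us j) = true

/-- The dual structure `D(t_Q)` of the S-term `t_Q = edge_S(tsQ)`. -/
noncomputable def Dual (S : σ.symb) (tsQ : Fin (σ.ar S) → VTerm σ) : Struct σ where
  dom := BDom (Term.vsub (σ := σ) (.inr ⟨S, tsQ⟩))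
  rel R := {vs |
    (∀ us ∈ Term.esub (σ := σ) (.inr ⟨S, tsQ⟩) R, ∀ i : Fin (σ.ar R),
        VTerm.pr R i us ∈ Term.vsub (σ := σ) (.inr ⟨S, tsQ⟩) →
        andT _ us vs → bext _ (vs i) (.pr R i us) = true) ∧
    (∀ h : R = S, ¬ andT _ (fun j => tsQ (Fin.cast (congrArg σ.ar h) j)) vs)}

theorem IsHom.comp {A B C : Struct σ} {g : B.dom → C.dom} {f : A.dom → B.dom}
    (hg : IsHom B C g) (hf : IsHom A B f) : IsHom A C (g ∘ f) :=
  fun R x hx => hg R (f ∘ x) (hf R x hx)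

namespace ETerm

theorem isHom_subtree_inclusion (R : σ.symb) (us : Fin (σ.ar R) → VTerm σ) (j : Fin (σ.ar R)) :
    IsHom (us j).tree (ETerm.tree R us) (fun x => ⟨j, x⟩) :=
  fun _ y hy => Or.inl ⟨j, y, hy, rfl⟩

theorem edgeRoot_mem_rel (R : σ.symb) (us : Fin (σ.ar R) → VTerm σ) :
    edgeRoot R us ∈ (ETerm.tree R us).rel R :=
  Or.inr ⟨rfl, rfl⟩

end ETerm

namespace VTerm

theorem hom_root_induction {B : Struct σ} {P : VTerm σ → B.dom → Prop}
    (vertex : ∀ b, P .vertex b)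
    (pr : ∀ (R : σ.symb) (us : Fin (σ.ar R) → VTerm σ), ∀ x ∈ B.rel R,
      (∀ j, P (us j) (x j)) → ∀ i, P (.pr R i us) (x i))
    (t : VTerm σ) (h : t.tree.dom → B.dom) (hh : IsHom t.tree B h) : P t (h t.root) := by
  induction t with
  | vertex => exact vertex _
  | pr R i us ih =>
    -- `T(pr_i(t))` and `T(t)` are definitionally equal.
    change IsHom (ETerm.tree R us) B h at hh
    have root_edge_mem : (fun j => h (edgeRoot R us j)) ∈ B.rel R :=
      hh R _ (ETerm.edgeRoot_mem_rel R us)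
    have root_edge_holds : ∀ j, P (us j) (h (edgeRoot R us j)) := fun j =>
      ih j _ (hh.comp (ETerm.isHom_subtree_inclusion R us j))
    exact pr R us _ root_edge_mem root_edge_holds i

theorem self_mem_vsub (t : VTerm σ) : t ∈ t.vsub := by
  cases t <;> simp [VTerm.vsub]

theorem mem_vsub_of_mem_esub {t : VTerm σ} {R : σ.symb} {us : Fin (σ.ar R) → VTerm σ}
    (hus : us ∈ t.esub R) (j : Fin (σ.ar R)) : us j ∈ t.vsub := by
  induction t with
  | vertex => exact hus.elim
  | pr R' i ts ih =>
    refine Set.mem_insert_of_mem _ (Set.mem_iUnion.2 ?_)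
    rcases hus with ⟨rfl, rfl⟩ | ⟨k, hk⟩
    · exact ⟨j, (ts j).self_mem_vsub⟩
    · exact ⟨k, ih k hk⟩

theorem mem_esub_of_pr_mem_vsub {t : VTerm σ} {R : σ.symb} {i : Fin (σ.ar R)}
    {us : Fin (σ.ar R) → VTerm σ} (ht : VTerm.pr R i us ∈ t.vsub) : us ∈ t.esub R := by
  induction t with
  | vertex => cases ht
  | pr R' i' ts ih =>
    rcases ht with ht | ht
    · cases ht
      exact Or.inl ⟨rfl, rfl⟩
    · obtain ⟨k, hk⟩ := Set.mem_iUnion.1 ht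
      exact Or.inr ⟨k, ih k hk⟩

end VTerm

/-- Closure of a set of V-terms under V-subterms. It suffices to ask for the immediate V-subterms
`us j` of `pr_i(edge_R(us))`. -/
def IsSubtermClosed (TV : Set (VTerm σ)) : Prop :=
  ∀ ⦃R : σ.symb⦄ ⦃i : Fin (σ.ar R)⦄ ⦃us : Fin (σ.ar R) → VTerm σ⦄,
    VTerm.pr R i us ∈ TV → ∀ j, us j ∈ TV

namespace Term

theorem mem_vsub_of_mem_esub {q : Term σ} {R : σ.symb} {us : Fin (σ.ar R) → VTerm σ}
    (hus : us ∈ q.esub R) (j : Fin (σ.ar R)) : us j ∈ q.vsub := by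
  rcases q with t | ⟨S, ts⟩
  · exact VTerm.mem_vsub_of_mem_esub hus j
  · refine Set.mem_iUnion.2 ?_
    rcases hus with ⟨rfl, rfl⟩ | ⟨k, hk⟩
    · exact ⟨j, (ts j).self_mem_vsub⟩
    · exact ⟨k, VTerm.mem_vsub_of_mem_esub hk j⟩

theorem mem_esub_of_pr_mem_vsub {q : Term σ} {R : σ.symb} {i : Fin (σ.ar R)}
    {us : Fin (σ.ar R) → VTerm σ} (h : VTerm.pr R i us ∈ q.vsub) : us ∈ q.esub R := by
  rcases q with t | ⟨S, ts⟩
  · exact VTerm.mem_esub_of_pr_mem_vsub h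
  · obtain ⟨k, hk⟩ := Set.mem_iUnion.1 h
    exact Or.inr ⟨k, VTerm.mem_esub_of_pr_mem_vsub hk⟩

theorem isSubtermClosed_vsub (q : Term σ) : IsSubtermClosed q.vsub :=
  fun _ _ _ h => mem_vsub_of_mem_esub (mem_esub_of_pr_mem_vsub h)

end Term

/-- Condition (D1) for a family of relations on the Boolean tuples indexed by an arbitrary set `TV`
of V-terms. The quantifier over R-terms `edge_R(us)` ranges over all `us` with
`pr_i(edge_R(us)) ∈ TV`. -/
def SatisfiesD1 (TV : Set (VTerm σ)) (rel : ∀ R : σ.symb, Set (Fin (σ.ar R) → BDom TV)) : Prop :=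
  ∀ R : σ.symb, ∀ vs ∈ rel R, ∀ (us : Fin (σ.ar R) → VTerm σ) (i : Fin (σ.ar R)),
    VTerm.pr R i us ∈ TV → andT TV us vs → bext TV (vs i) (.pr R i us) = true

theorem Dual.satisfiesD1 (S : σ.symb) (tsQ : Fin (σ.ar S) → VTerm σ) :
    SatisfiesD1 (Term.vsub (.inr ⟨S, tsQ⟩)) (Dual S tsQ).rel :=
  fun _ _ hvs us i hpr => hvs.1 us (Term.mem_esub_of_pr_mem_vsub hpr) i hpr

section SubtermClosed

variable {TV : Set (VTerm σ)}

theorem bext_vertex (hTV : VTerm.vertex ∈ TV) (v : BDom TV) : bext TV v .vertex = true :=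
  (dif_pos hTV).trans (v.2 hTV)

variable {rel : ∀ R : σ.symb, Set (Fin (σ.ar R) → BDom TV)}

theorem SatisfiesD1.bext_root (hrel : SatisfiesD1 TV rel) (hTV : IsSubtermClosed TV)
    {t : VTerm σ} (ht : t ∈ TV) {h : t.tree.dom → BDom TV}
    (hh : IsHom t.tree ⟨BDom TV, rel⟩ h) : bext TV (h t.root) t = true := by
  refine VTerm.hom_root_induction (B := ⟨BDom TV, rel⟩)
    (P := fun s v => s ∈ TV → bext TV v s = true) (fun v hs => bext_vertex hs v) ?_ t h hh ht
  intro R us vs hvs ih i hpr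
  exact hrel R vs hvs us i hpr fun j => ih j (hTV hpr j)

theorem SatisfiesD1.andT_edgeRoot (hrel : SatisfiesD1 TV rel) (hTV : IsSubtermClosed TV)
    {R : σ.symb} {us : Fin (σ.ar R) → VTerm σ} (hus : ∀ j, us j ∈ TV)
    {h : (ETerm.tree R us).dom → BDom TV} (hh : IsHom (ETerm.tree R us) ⟨BDom TV, rel⟩ h) :
    andT TV us (fun j => h (edgeRoot R us j)) :=
  fun j => hrel.bext_root hTV (hus j) (hh.comp (ETerm.isHom_subtree_inclusion R us j))

theorem dual_claim_general (hTV : IsSubtermClosed TV) (hrel : SatisfiesD1 TV rel) :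
    (∀ t ∈ TV, ∀ h : t.tree.dom → BDom TV, IsHom t.tree ⟨BDom TV, rel⟩ h →
      bext TV (h t.root) t = true) ∧
    (∀ (R : σ.symb) (us : Fin (σ.ar R) → VTerm σ), (∀ j, us j ∈ TV) →
      ∀ h : (ETerm.tree R us).dom → BDom TV, IsHom (ETerm.tree R us) ⟨BDom TV, rel⟩ h →
        andT TV us (fun j => h (edgeRoot R us j))) :=
  ⟨fun _ ht _ hh => hrel.bext_root hTV ht hh, fun _ _ hus _ hh => hrel.andT_edgeRoot hTV hus hh⟩

end SubtermClosed

/-- for every subterm `t` of the S-term `t_Q = edge_S(tsQ)` and every homomorphism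
`h : T(t) → D(t_Q)`: if `t` is a V-term then `h(r_t)_t = true`, and if `t` is an R-term then
`&_t(h^R(r_t)) = true`. -/
theorem dual_claim {σ : Signature} (S : σ.symb) (tsQ : Fin (σ.ar S) → VTerm σ) :
    (∀ t : VTerm σ, t ∈ Term.vsub (σ := σ) (.inr ⟨S, tsQ⟩) →
      ∀ h : (t.tree).dom → (Dual S tsQ).dom, IsHom t.tree (Dual S tsQ) h →
        bext (Term.vsub (σ := σ) (.inr ⟨S, tsQ⟩)) (h t.root) t = true) ∧
    (∀ (R : σ.symb) (us : Fin (σ.ar R) → VTerm σ),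
      us ∈ Term.esub (σ := σ) (.inr ⟨S, tsQ⟩) R →
      ∀ h : (ETerm.tree R us).dom → (Dual S tsQ).dom,
        IsHom (ETerm.tree R us) (Dual S tsQ) h →
        andT (Term.vsub (σ := σ) (.inr ⟨S, tsQ⟩)) us (fun j => h (edgeRoot R us j))) := by
  have general := dual_claim_general (Term.isSubtermClosed_vsub _) (Dual.satisfiesD1 S tsQ)
  exact ⟨general.1, fun R us hus => general.2 R us (Term.mem_vsub_of_mem_esub hus)⟩
end

section
/- In the setting of the template with P = Š_1 and the construction Ω described in the context: let t ∈ 𝒯, let h : T(t) → Ω(B) be a homomorphism, and let d : Š^{T(t)} → B be a map such that for every Š-edge s ∈ Š^{T(t)}, d(s) is a witness for the edge h^{Š}(s) ∈ Š^{Ω(B)}. Then d is a homomorphism Γ(T(t)) → B. -/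
variable {σ τ υ : Signature}

/-- `𝒯_V`: all V-subterms of the chosen terms `t_R`. -/
def TVs (tq : τ.symb → Term σ) : Set (VTerm σ) := ⋃ R, (tq R).vsub

/-- `𝒯_S`: all S-subterms of the chosen terms `t_R`. -/
def TEs (tq : τ.symb → Term σ) (S : σ.symb) : Set (Fin (σ.ar S) → VTerm σ) := ⋃ R, (tq R).esub S

/-- The central Pultr functor for the template where `P = Š₁` consists of a single `Š`-edge
(`Š = Sc`), `Q_R = T(tq R)`, and `ε_{i,R}` selects the `Š`-edge `x R i` of `Q_R`. -/
def GammaE (Sc : σ.symb) (tq : τ.symb → Term σ)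
    (x : ∀ R : τ.symb, Fin (τ.ar R) → (Fin (σ.ar Sc) → ((tq R).tree).dom))
    (A : Struct σ) : Struct τ where
  dom := {e : Fin (σ.ar Sc) → A.dom // e ∈ A.rel Sc}
  rel R := {y | ∃ h : ((tq R).tree).dom → A.dom, IsHom ((tq R).tree) A h ∧
      ∀ i, (y i).1 = fun j => h (x R i j)}

/-- Domain of `Ω(B)`: tuples of sets of homomorphisms `Γ(T(t)) → B`, indexed by `t ∈ 𝒯_V`,
whose entry at `vertex` is `{∅}` (the set containing the empty map, i.e. the full set of maps
from the empty domain of `Γ(T(vertex))`). -/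
def OmEDom (Sc : σ.symb) (tq : τ.symb → Term σ)
    (x : ∀ R : τ.symb, Fin (τ.ar R) → (Fin (σ.ar Sc) → ((tq R).tree).dom))
    (B : Struct τ) : Type :=
  {U : (t : {t : VTerm σ // t ∈ TVs tq}) → Set ((GammaE Sc tq x t.1.tree).dom → B.dom) //
    (∀ t, ∀ f ∈ U t, IsHom (GammaE Sc tq x t.1.tree) B f) ∧
    (∀ h : VTerm.vertex ∈ TVs tq, U ⟨.vertex, h⟩ = Set.univ)}

open Classical in
/-- The entry of `U` at the V-term `t` (by convention `∅` if `t ∉ 𝒯_V`). -/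
noncomputable def UextE (Sc : σ.symb) (tq : τ.symb → Term σ)
    (x : ∀ R : τ.symb, Fin (τ.ar R) → (Fin (σ.ar Sc) → ((tq R).tree).dom))
    (B : Struct τ) (U : OmEDom Sc tq x B) (t : VTerm σ) :
    Set ((GammaE Sc tq x t.tree).dom → B.dom) :=
  if h : t ∈ TVs tq then U.1 ⟨t, h⟩ else ∅

/-- Restriction of a map defined on the `Š`-edges of `T(edge_S(ts))` to the `Š`-edges of the
`i`-th subtree. -/
def restrE (Sc : σ.symb) (tq : τ.symb → Term σ)
    (x : ∀ R : τ.symb, Fin (τ.ar R) → (Fin (σ.ar Sc) → ((tq R).tree).dom))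
    (B : Struct τ) (S : σ.symb) (ts : Fin (σ.ar S) → VTerm σ) (i : Fin (σ.ar S))
    (g : (GammaE Sc tq x (ETerm.tree S ts)).dom → B.dom) :
    (GammaE Sc tq x (ts i).tree).dom → B.dom :=
  fun y => g ⟨fun j => ⟨i, y.1 j⟩, Or.inl ⟨i, y.1, y.2, rfl⟩⟩

/-- `⨉_t(Us) = {f₁ ∪ ⋯ ∪ f_k : f_i ∈ (Us i)_{ts i}}` for the S-term `t = edge_S(ts)` with
`S ≠ Š`: maps on the `Š`-edges of `T(t)` all of whose restrictions lie in the prescribed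
sets. -/
def timesNE (Sc : σ.symb) (tq : τ.symb → Term σ)
    (x : ∀ R : τ.symb, Fin (τ.ar R) → (Fin (σ.ar Sc) → ((tq R).tree).dom))
    (B : Struct τ) (S : σ.symb) (ts : Fin (σ.ar S) → VTerm σ)
    (Us : Fin (σ.ar S) → OmEDom Sc tq x B) :
    Set ((GammaE Sc tq x (ETerm.tree S ts)).dom → B.dom) :=
  {g | ∀ i, restrE Sc tq x B S ts i g ∈ UextE Sc tq x B (Us i) (ts i)}

theorem rootEdgeMem (Sc : σ.symb) (ts : Fin (σ.ar Sc) → VTerm σ) :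
    edgeRoot Sc ts ∈ (ETerm.tree Sc ts).rel Sc :=
  Or.inr ⟨rfl, rfl⟩

/-- `⨉_t(Us; e) = {f₁ ∪ ⋯ ∪ f_k ∪ (r_t ↦ e) : f_i ∈ (Us i)_{ts i}}` for the `Š`-term
`t = edge_Š(ts)` with witness `e`. -/
def timesW (Sc : σ.symb) (tq : τ.symb → Term σ)
    (x : ∀ R : τ.symb, Fin (τ.ar R) → (Fin (σ.ar Sc) → ((tq R).tree).dom))
    (B : Struct τ) (ts : Fin (σ.ar Sc) → VTerm σ)
    (Us : Fin (σ.ar Sc) → OmEDom Sc tq x B) (e : B.dom) :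
    Set ((GammaE Sc tq x (ETerm.tree Sc ts)).dom → B.dom) :=
  {g | (∀ i, restrE Sc tq x B Sc ts i g ∈ UextE Sc tq x B (Us i) (ts i)) ∧
       g ⟨edgeRoot Sc ts, rootEdgeMem Sc ts⟩ = e}

/-- `e ∈ B` is a witness for the tuple `Us` of elements of `Ω(B)`: conditions (B1) and (B2). -/
def IsWitness (Sc : σ.symb) (tq : τ.symb → Term σ)
    (x : ∀ R : τ.symb, Fin (τ.ar R) → (Fin (σ.ar Sc) → ((tq R).tree).dom))
    (B : Struct τ) (Us : Fin (σ.ar Sc) → OmEDom Sc tq x B) (e : B.dom) : Prop :=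
  ∀ ts ∈ TEs tq Sc,
    (∀ i : Fin (σ.ar Sc), VTerm.pr Sc i ts ∈ TVs tq →
        ∀ g ∈ timesW Sc tq x B ts Us e, g ∈ UextE Sc tq x B (Us i) (.pr Sc i ts)) ∧
    (∀ g ∈ timesW Sc tq x B ts Us e, IsHom (GammaE Sc tq x (ETerm.tree Sc ts)) B g)

/-- The right adjoint `Ω` for the template with `P = Š₁`. -/
noncomputable def OmegaE (Sc : σ.symb) (tq : τ.symb → Term σ)
    (x : ∀ R : τ.symb, Fin (τ.ar R) → (Fin (σ.ar Sc) → ((tq R).tree).dom))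
    (B : Struct τ) : Struct σ where
  dom := OmEDom Sc tq x B
  rel S := {Us |
    (S ≠ Sc →
      (∀ ts ∈ TEs tq S, ∀ i : Fin (σ.ar S), VTerm.pr S i ts ∈ TVs tq →
          ∀ g ∈ timesNE Sc tq x B S ts Us, g ∈ UextE Sc tq x B (Us i) (.pr S i ts)) ∧
      (∀ ts ∈ TEs tq S, ∀ g ∈ timesNE Sc tq x B S ts Us,
          IsHom (GammaE Sc tq x (ETerm.tree S ts)) B g)) ∧
    (∀ heq : S = Sc, ∃ e : B.dom,
        IsWitness Sc tq x B (fun j => Us (Fin.cast (congrArg σ.ar heq.symm) j)) e)}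

/-- The inclusion of the `i`-th subtree `T(ts i)` into `T(edge_S(ts))`. -/
def ETerm.incl (S : σ.symb) (ts : Fin (σ.ar S) → VTerm σ) (i : Fin (σ.ar S)) :
    (ts i).tree.dom → (ETerm.tree S ts).dom :=
  fun v => ⟨i, v⟩

theorem ETerm.isHom_incl (S : σ.symb) (ts : Fin (σ.ar S) → VTerm σ) (i : Fin (σ.ar S)) :
    IsHom (ts i).tree (ETerm.tree S ts) (ETerm.incl S ts i) :=
  fun _ y hy => Or.inl ⟨i, y, hy, rfl⟩

section Subterms

variable {S : σ.symb} {ts : Fin (σ.ar S) → VTerm σ} {i : Fin (σ.ar S)}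

theorem VTerm.self_mem_vsub_s13 (t : VTerm σ) : t ∈ t.vsub := by
  cases t with
  | vertex => exact Set.mem_singleton _
  | pr R i ts => exact Set.mem_insert _ _

theorem VTerm.mem_esub_of_pr_mem_vsub_s13 {t : VTerm σ} (ht : .pr S i ts ∈ t.vsub) :
    ts ∈ t.esub S := by
  induction t with
  | vertex => cases ht
  | pr R k us ih =>
    rcases ht with hroot | hsub
    · cases hroot
      exact Or.inl ⟨rfl, rfl⟩
    · obtain ⟨j, hj⟩ := Set.mem_iUnion.1 hsub
      exact Or.inr ⟨j, ih j hj⟩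

theorem VTerm.mem_vsub_of_mem_esub_s13 {t : VTerm σ} (ht : ts ∈ t.esub S) (i : Fin (σ.ar S)) :
    ts i ∈ t.vsub := by
  induction t with
  | vertex => cases ht
  | pr R k us ih =>
    refine Or.inr (Set.mem_iUnion.2 ?_)
    rcases ht with ⟨rfl, rfl⟩ | ⟨j, hj⟩
    · exact ⟨i, (us i).self_mem_vsub_s13⟩
    · exact ⟨j, ih j hj⟩

theorem Term.mem_esub_of_pr_mem_vsub_s13 {t : Term σ} (ht : .pr S i ts ∈ t.vsub) :
    ts ∈ t.esub S := by
  rcases t with t | ⟨R, us⟩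
  · exact VTerm.mem_esub_of_pr_mem_vsub_s13 ht
  · obtain ⟨j, hj⟩ := Set.mem_iUnion.1 ht
    exact Or.inr ⟨j, VTerm.mem_esub_of_pr_mem_vsub_s13 hj⟩

theorem Term.mem_vsub_of_mem_esub_s13 {t : Term σ} (ht : ts ∈ t.esub S) (i : Fin (σ.ar S)) :
    ts i ∈ t.vsub := by
  rcases t with t | ⟨R, us⟩
  · exact VTerm.mem_vsub_of_mem_esub_s13 ht i
  · refine Set.mem_iUnion.2 ?_
    rcases ht with ⟨rfl, rfl⟩ | ⟨j, hj⟩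
    · exact ⟨i, (us i).self_mem_vsub_s13⟩
    · exact ⟨j, VTerm.mem_vsub_of_mem_esub_s13 hj i⟩

variable {tq : τ.symb → Term σ}

theorem mem_TEs_of_pr_mem_TVs (ht : .pr S i ts ∈ TVs tq) : ts ∈ TEs tq S := by
  obtain ⟨R, hR⟩ := Set.mem_iUnion.1 ht
  exact Set.mem_iUnion.2 ⟨R, Term.mem_esub_of_pr_mem_vsub_s13 hR⟩

theorem mem_TVs_of_mem_TEs (hts : ts ∈ TEs tq S) (i : Fin (σ.ar S)) : ts i ∈ TVs tq := by
  obtain ⟨R, hR⟩ := Set.mem_iUnion.1 hts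
  exact Set.mem_iUnion.2 ⟨R, Term.mem_vsub_of_mem_esub_s13 hR i⟩

end Subterms

section Omega

variable {Sc : σ.symb} {tq : τ.symb → Term σ}
  {x : ∀ R : τ.symb, Fin (τ.ar R) → (Fin (σ.ar Sc) → ((tq R).tree).dom)} {B : Struct τ}

theorem UextE_of_mem (U : OmEDom Sc tq x B) {t : VTerm σ} (ht : t ∈ TVs tq) :
    UextE Sc tq x B U t = U.1 ⟨t, ht⟩ :=
  dif_pos ht

theorem UextE_of_notMem (U : OmEDom Sc tq x B) {t : VTerm σ} (ht : t ∉ TVs tq) :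
    UextE Sc tq x B U t = ∅ :=
  dif_neg ht

theorem mem_UextE_vertex (U : OmEDom Sc tq x B) (ht : .vertex ∈ TVs tq)
    (f : (GammaE Sc tq x VTerm.vertex.tree).dom → B.dom) : f ∈ UextE Sc tq x B U .vertex := by
  rw [UextE_of_mem U ht, U.2.2 ht]
  exact Set.mem_univ f

theorem isHom_of_mem_UextE {U : OmEDom Sc tq x B} {t : VTerm σ}
    {f : (GammaE Sc tq x t.tree).dom → B.dom} (hf : f ∈ UextE Sc tq x B U t) :
    IsHom (GammaE Sc tq x t.tree) B f := by
  by_cases ht : t ∈ TVs tq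
  · rw [UextE_of_mem U ht] at hf
    exact U.2.1 ⟨t, ht⟩ f hf
  · rw [UextE_of_notMem U ht] at hf
    exact hf.elim

/-- The action of the functor `Γ` on a homomorphism: `Š`-edges are mapped coordinatewise. -/
def GammaE.map {A C : Struct σ} {f : A.dom → C.dom} (hf : IsHom A C f) :
    (GammaE Sc tq x A).dom → (GammaE Sc tq x C).dom :=
  fun s => ⟨fun i => f (s.1 i), hf Sc s.1 s.2⟩

/-- A homomorphism `h : A → Ω(B)` together with a choice `d` of witnesses for the images of the
`Š`-edges of `A`. The trees `T(t)` are the case of interest; arbitrary `A` lets such pairs be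
pulled back along homomorphisms. -/
structure IsWitnessedHom (A : Struct σ) (h : A.dom → (OmegaE Sc tq x B).dom)
    (d : (GammaE Sc tq x A).dom → B.dom) : Prop where
  isHom : IsHom A (OmegaE Sc tq x B) h
  isWitness : ∀ s, IsWitness Sc tq x B (fun i => h (s.1 i)) (d s)

namespace IsWitnessedHom

theorem comp {A C : Struct σ} {h : C.dom → (OmegaE Sc tq x B).dom}
    {d : (GammaE Sc tq x C).dom → B.dom} (hd : IsWitnessedHom C h d) {f : A.dom → C.dom}
    (hf : IsHom A C f) : IsWitnessedHom A (h ∘ f) (d ∘ GammaE.map hf) where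
  isHom := hd.isHom.comp hf
  isWitness s := hd.isWitness (GammaE.map hf s)

section Edge

variable {S : σ.symb} {ts : Fin (σ.ar S) → VTerm σ}
  {h : (ETerm.tree S ts).dom → (OmegaE Sc tq x B).dom}
  {d : (GammaE Sc tq x (ETerm.tree S ts)).dom → B.dom}

theorem restr (hd : IsWitnessedHom (ETerm.tree S ts) h d) (i : Fin (σ.ar S)) :
    IsWitnessedHom (ts i).tree (h ∘ ETerm.incl S ts i) (restrE Sc tq x B S ts i d) :=
  hd.comp (ETerm.isHom_incl S ts i)

theorem mem_UextE_pr (hd : IsWitnessedHom (ETerm.tree S ts) h d)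
    (hr : ∀ i, restrE Sc tq x B S ts i d ∈ UextE Sc tq x B (h (edgeRoot S ts i)) (ts i))
    {i : Fin (σ.ar S)} (hi : .pr S i ts ∈ TVs tq) :
    d ∈ UextE Sc tq x B (h (edgeRoot S ts i)) (.pr S i ts) := by
  have hts : ts ∈ TEs tq S := mem_TEs_of_pr_mem_TVs hi
  by_cases hS : S = Sc
  · subst hS
    obtain ⟨hB1, -⟩ := hd.isWitness ⟨edgeRoot S ts, rootEdgeMem S ts⟩ ts hts
    exact hB1 i hi d ⟨hr, rfl⟩
  · obtain ⟨hA1, -⟩ := (hd.isHom S _ (rootEdgeMem S ts)).1 hS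
    exact hA1 ts hts i hi d hr

theorem isHom_edge (hd : IsWitnessedHom (ETerm.tree S ts) h d) (hts : ts ∈ TEs tq S)
    (hr : ∀ i, restrE Sc tq x B S ts i d ∈ UextE Sc tq x B (h (edgeRoot S ts i)) (ts i)) :
    IsHom (GammaE Sc tq x (ETerm.tree S ts)) B d := by
  by_cases hS : S = Sc
  · subst hS
    obtain ⟨-, hB2⟩ := hd.isWitness ⟨edgeRoot S ts, rootEdgeMem S ts⟩ ts hts
    exact hB2 d ⟨hr, rfl⟩
  · obtain ⟨-, hA2⟩ := (hd.isHom S _ (rootEdgeMem S ts)).1 hS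
    exact hA2 ts hts d hr

end Edge

theorem mem_UextE_root {t : VTerm σ} (ht : t ∈ TVs tq)
    {h : t.tree.dom → (OmegaE Sc tq x B).dom} {d : (GammaE Sc tq x t.tree).dom → B.dom}
    (hd : IsWitnessedHom t.tree h d) : d ∈ UextE Sc tq x B (h t.root) t := by
  induction t with
  | vertex => exact mem_UextE_vertex _ ht d
  | pr S i ts ih =>
    -- `T(pr_i(edge_S(ts)))` and `T(edge_S(ts))` are definitionally the same structure.
    change IsWitnessedHom (ETerm.tree S ts) h d at hd
    have hts : ts ∈ TEs tq S := mem_TEs_of_pr_mem_TVs ht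
    exact hd.mem_UextE_pr (fun j => ih j (mem_TVs_of_mem_TEs hts j) (hd.restr j)) ht

end IsWitnessedHom

end Omega

/-- for `t ∈ 𝒯`, a homomorphism `h : T(t) → Ω(B)`, and a map
`d : Š^{T(t)} → B` such that `d(s)` is a witness for the edge `h^{Š}(s)` for every `Š`-edge
`s` of `T(t)`, the map `d` is a homomorphism `Γ(T(t)) → B`.  (Stated for V-terms and for
R-terms in `𝒯`.) -/
theorem omegaE_tree_lemma {σ τ : Signature} (Sc : σ.symb) (tq : τ.symb → Term σ)
    (x : ∀ R : τ.symb, Fin (τ.ar R) → (Fin (σ.ar Sc) → ((tq R).tree).dom))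
    (hx : ∀ R i, x R i ∈ ((tq R).tree).rel Sc) (B : Struct τ) :
    (∀ t : VTerm σ, t ∈ TVs tq →
      ∀ h : (t.tree).dom → (OmegaE Sc tq x B).dom, IsHom t.tree (OmegaE Sc tq x B) h →
      ∀ d : (GammaE Sc tq x t.tree).dom → B.dom,
        (∀ s : (GammaE Sc tq x t.tree).dom,
            IsWitness Sc tq x B (fun i => h (s.1 i)) (d s)) →
        IsHom (GammaE Sc tq x t.tree) B d) ∧
    (∀ (S : σ.symb) (ts : Fin (σ.ar S) → VTerm σ), ts ∈ TEs tq S →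
      ∀ h : (ETerm.tree S ts).dom → (OmegaE Sc tq x B).dom,
        IsHom (ETerm.tree S ts) (OmegaE Sc tq x B) h →
      ∀ d : (GammaE Sc tq x (ETerm.tree S ts)).dom → B.dom,
        (∀ s : (GammaE Sc tq x (ETerm.tree S ts)).dom,
            IsWitness Sc tq x B (fun i => h (s.1 i)) (d s)) →
        IsHom (GammaE Sc tq x (ETerm.tree S ts)) B d) := by
  refine ⟨fun t ht h hh d hd => ?_, fun S ts hts h hh d hd => ?_⟩
  · have hmem : d ∈ UextE Sc tq x B (h t.root) t := IsWitnessedHom.mem_UextE_root ht ⟨hh, hd⟩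
    exact isHom_of_mem_UextE hmem
  · have hw : IsWitnessedHom (ETerm.tree S ts) h d := ⟨hh, hd⟩
    exact hw.isHom_edge hts fun i => (hw.restr i).mem_UextE_root (mem_TVs_of_mem_TEs hts i)
end
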